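/- arXiv:1507.08641 — 2 statements merged into one kernel-verified Lean document; each statement's English description precedes it below -/
import Mathlib

section
/- Let s be a positive integer with gcd(s, m) = 1, and let C ⊆ F_{q^m}^n be a linear MRD code of dimension k with 1 ≤ k < n. Then dim_{F_{q^m}}(C ∩ C^{[s]}) = k − 1 if and only if C is a generalized Gabidulin code with parameter s, i.e., there exist g_1, …, g_n ∈ F_{q^m} linearly independent over F_q such that C is the F_{q^m}-span of the k Moore vectors (g_1^{[si]}, …, g_n^{[si]}) for i = 0, …, k − 1. -/
/-!
Write `θ` for the coordinatewise `q^s`-power map. It comes from an automorphism `σ` of `K` whose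
fixed field is `Fq`, because `gcd(s, m) = 1`.

The only facts about an MRD code `C` with `k < n` that are needed are:

* no nonzero subspace of `C` is stable under `θ` (`not_stable_of_forall_rank`). A stable subspace
  contains a nonzero word of minimal support, normalised to have a coordinate equal to `1`;
  subtracting it from its image under `θ` shrinks the support, so it is fixed by `θ`. Its entries
  then lie in `Fq` and its rank is at most `1 < n - k + 1`;
* no nontrivial `Fq`-linear relation holds between the coordinates of all codewords
  (`no_relation`), since otherwise a codeword vanishing in `k - 1` suitable coordinates has rank
  at most `n - k`.

If `C` is spanned by `g, θ g, …, θ^(k-1) g`, then `C ∩ θ C` contains `θ g, …, θ^(k-1) g`, so its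
dimension is at least `k - 1`, and it is not `k` because `C` is not stable.

Conversely, let `C₀ = C` and `Cᵢ₊₁ = Cᵢ ∩ θ Cᵢ`. For `i ≥ 1`, both `Cᵢ` and `θ Cᵢ` lie in `θ Cᵢ₋₁`,
so the dimension drops at each step by at most the preceding drop, hence by at most `1`. Thus
`Cₖ₋₁` has a nonzero element `h`, and `h = θ^(k-1) g` with `g, θ g, …, θ^(k-1) g` all in `C`. These
vectors are linearly independent, since the first dependence would produce a `θ`-stable subspace of
`C`; so they span `C`. An `Fq`-linear relation between the entries of `g` would be inherited by every
codeword, so `g` has `Fq`-independent entries.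
-/

open Matrix

/-- The rank over the subfield `Fq` of a vector with entries in `K`:
the `Fq`-dimension of the `Fq`-span of its coordinates. -/
noncomputable def rankQ (Fq : Type) {K : Type} [Field Fq] [Field K] [Algebra Fq K] {n : ℕ}
    (v : Fin n → K) : ℕ :=
  Module.finrank Fq (Submodule.span Fq (Set.range v))

/-- The minimum rank distance of a linear rank-metric code `C ⊆ K^n`. -/
noncomputable def minRankDist (Fq : Type) {K : Type} [Field Fq] [Field K] [Algebra Fq K] {n : ℕ}
    (C : Submodule K (Fin n → K)) : ℕ :=
  sInf (rankQ Fq '' {c : Fin n → K | c ∈ C ∧ c ≠ 0})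

/-- A linear code `C ⊆ K^n` of dimension `k` over `K` is MRD if its minimum
rank distance equals `n - k + 1`. -/
def IsMRD (Fq : Type) {K : Type} [Field Fq] [Field K] [Algebra Fq K] {n : ℕ}
    (C : Submodule K (Fin n → K)) (k : ℕ) : Prop :=
  Module.finrank K C = k ∧ minRankDist Fq C = n - k + 1

/-- `G` is a generator matrix of `C`: its rows form a `K`-basis of `C`. -/
def IsGenMat {K : Type} [Field K] {k n : ℕ} (C : Submodule K (Fin n → K))
    (G : Matrix (Fin k) (Fin n) K) : Prop :=
  LinearIndependent K (fun i => G i) ∧ Submodule.span K (Set.range fun i => G i) = C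

section Twist

/-! ### Twisted codes -/

variable {Fq K : Type} [Field Fq] [Field K] [Algebra Fq K] {n : ℕ}

/-- The coordinatewise action of a field automorphism on vectors. -/
def vecMap (σ : K ≃ₐ[Fq] K) (v : Fin n → K) : Fin n → K := fun j => σ (v j)

/-- The image of a code under the coordinatewise action of `σ`, given as the preimage under `σ⁻¹`
so that it is visibly a subspace. -/
def twist (σ : K ≃ₐ[Fq] K) (C : Submodule K (Fin n → K)) : Submodule K (Fin n → K) where
  carrier := {v | vecMap σ.symm v ∈ C}
  add_mem' {a b} ha hb := by
    have : vecMap σ.symm (a + b) = vecMap σ.symm a + vecMap σ.symm b := by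
      ext j; simp [vecMap]
    simpa [this] using C.add_mem ha hb
  zero_mem' := by
    have : vecMap σ.symm (0 : Fin n → K) = 0 := by ext j; simp [vecMap]
    simp [this]
  smul_mem' c a ha := by
    have : vecMap σ.symm (c • a) = σ.symm c • vecMap σ.symm a := by
      ext j; simp [vecMap]
    simpa [this] using C.smul_mem _ ha

theorem mem_twist {σ : K ≃ₐ[Fq] K} {C : Submodule K (Fin n → K)} {v : Fin n → K} :
    v ∈ twist σ C ↔ ∃ c ∈ C, vecMap σ c = v := by
  constructor
  · intro h
    exact ⟨vecMap σ.symm v, h, by ext j; simp [vecMap]⟩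
  · rintro ⟨c, hc, rfl⟩
    have : vecMap σ.symm (vecMap σ c) = c := by ext j; simp [vecMap]
    change vecMap σ.symm (vecMap σ c) ∈ C
    rwa [this]

theorem vecMap_mem_twist {σ : K ≃ₐ[Fq] K} {C : Submodule K (Fin n → K)} {v : Fin n → K}
    (h : v ∈ C) : vecMap σ v ∈ twist σ C := mem_twist.2 ⟨v, h, rfl⟩

theorem twist_mono {σ : K ≃ₐ[Fq] K} {C D : Submodule K (Fin n → K)} (h : C ≤ D) :
    twist σ C ≤ twist σ D := fun _ hv => h hv

theorem span_image_eq_twist (σ : K ≃ₐ[Fq] K) (C : Submodule K (Fin n → K)) :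
    Submodule.span K (vecMap σ '' (C : Set (Fin n → K))) = twist σ C := by
  have : vecMap σ '' (C : Set (Fin n → K)) = (twist σ C : Set (Fin n → K)) := by
    ext v
    simp only [Set.mem_image, SetLike.mem_coe, mem_twist]
  rw [this, Submodule.span_eq]

theorem finrank_twist (σ : K ≃ₐ[Fq] K) (C : Submodule K (Fin n → K)) :
    Module.finrank K (twist σ C) = Module.finrank K C := by
  let j : C ≃+ twist σ C :=
    { toFun := fun c => ⟨vecMap σ c.1, vecMap_mem_twist c.2⟩
      invFun := fun c => ⟨vecMap σ.symm c.1, c.2⟩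
      left_inv := fun c => by ext i; simp [vecMap]
      right_inv := fun c => by ext i; simp [vecMap]
      map_add' := fun a b => by ext i; simp [vecMap] }
  have := rank_eq_of_equiv_equiv (σ : K → K) j σ.bijective
    (fun r c => by ext i; simp [j, vecMap])
  simp [Module.finrank, this]

theorem vecMap_iterate_apply (σ : K ≃ₐ[Fq] K) (v : Fin n → K) (i : ℕ) (j : Fin n) :
    (vecMap σ)^[i] v j = (σ)^[i] (v j) := by
  induction i with
  | zero => rfl
  | succ i ih => simp only [Function.iterate_succ_apply', ← ih]; rfl

/-! ### Stable subspaces and MRD codes -/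

/-- A nonzero `σ`-stable subspace contains a nonzero word fixed by `σ`, namely a word of minimal
support scaled to have a coordinate equal to `1`. -/
theorem exists_fixed_of_stable (σ : K ≃ₐ[Fq] K) (D : Submodule K (Fin n → K)) (hD : D ≠ ⊥)
    (hst : ∀ d ∈ D, vecMap σ d ∈ D) : ∃ c ∈ D, c ≠ 0 ∧ vecMap σ c = c := by
  classical
  have hex : ∃ w, ∃ d ∈ D, d ≠ 0 ∧ (Finset.univ.filter fun j => d j ≠ 0).card = w := by
    obtain ⟨d, hd, h0⟩ := Submodule.exists_mem_ne_zero_of_ne_bot hD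
    exact ⟨_, d, hd, h0, rfl⟩
  obtain ⟨d, hd, h0, hw⟩ := Nat.find_spec hex
  obtain ⟨j, hj⟩ := Function.ne_iff.1 h0
  simp only [Pi.zero_apply] at hj
  set c : Fin n → K := (d j)⁻¹ • d with hc
  have hcD : c ∈ D := D.smul_mem _ hd
  have hcj : c j = 1 := by simp [hc, hj]
  refine ⟨c, hcD, fun h => by simp [h] at hcj, ?_⟩
  by_contra hne
  have hsub : vecMap σ c - c ≠ 0 := sub_ne_zero.2 hne
  refine Nat.find_min hex ?_ ⟨_, D.sub_mem (hst c hcD) hcD, hsub, rfl⟩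
  rw [← hw]
  apply Finset.card_lt_card
  rw [Finset.ssubset_iff_of_subset]
  · exact ⟨j, by simp [hj], by
      rw [Finset.mem_filter]; simp only [Pi.sub_apply, vecMap, hcj]; simp⟩
  · intro i
    simp only [Finset.mem_filter, Finset.mem_univ, true_and]
    contrapose!
    intro hi
    simp [vecMap, hc, hi]

/-- If every nonzero word of `C` has rank at least two over the fixed field `Fq` of `σ`, then `C` has
no nonzero `σ`-stable subspace. -/
theorem not_stable_of_forall_rank (σ : K ≃ₐ[Fq] K)
    (hfix : ∀ x, σ x = x → ∃ a : Fq, algebraMap Fq K a = x)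
    (C : Submodule K (Fin n → K)) (hC : ∀ c ∈ C, c ≠ 0 → 2 ≤ rankQ Fq c)
    (D : Submodule K (Fin n → K)) (hDC : D ≤ C) (hst : ∀ d ∈ D, vecMap σ d ∈ D) : D = ⊥ := by
  by_contra hD
  obtain ⟨c, hc, h0, hcf⟩ := exists_fixed_of_stable σ D hD hst
  have h2 := hC c (hDC hc) h0
  have hle : Submodule.span Fq (Set.range c) ≤ Submodule.span Fq {(1 : K)} := by
    rw [Submodule.span_le]
    rintro _ ⟨j, rfl⟩
    obtain ⟨a, ha⟩ := hfix (c j) (congrFun hcf j)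
    rw [SetLike.mem_coe, Submodule.mem_span_singleton]
    exact ⟨a, by rw [← ha, Algebra.algebraMap_eq_smul_one]⟩
  have h1 := Submodule.finrank_mono hle
  have h3 := finrank_span_singleton (K := Fq) (one_ne_zero (α := K))
  unfold rankQ at h2
  omega

theorem IsMRD.le_rankQ {k : ℕ} {C : Submodule K (Fin n → K)} (h : IsMRD Fq C k)
    {c : Fin n → K} (hc : c ∈ C) (h0 : c ≠ 0) : n - k + 1 ≤ rankQ Fq c := by
  rw [← h.2]
  exact Nat.sInf_le ⟨c, ⟨hc, h0⟩, rfl⟩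

/-- The coordinates of an MRD code satisfy no common nontrivial `Fq`-linear relation. -/
theorem IsMRD.no_relation {k : ℕ} {C : Submodule K (Fin n → K)} (h : IsMRD Fq C k) (hk : 1 ≤ k)
    (hkn : k < n) (a : Fin n → Fq) (ha : ∀ c ∈ C, ∑ j, a j • c j = 0) (j : Fin n) : a j = 0 := by
  classical
  by_contra hj
  obtain ⟨S, hS, hcard⟩ := Finset.exists_subset_card_eq
    (s := Finset.univ.erase j) (n := k - 1) (by simp; omega)
  -- The restriction of `C` to the `k - 1` coordinates in `S` has a nontrivial kernel.
  let f : C →ₗ[K] (S → K) := (LinearMap.funLeft K K (fun i : S => (i : Fin n))).comp C.subtype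
  have hker : LinearMap.ker f ≠ ⊥ := by
    apply LinearMap.ker_ne_bot_of_finrank_lt
    rw [h.1]
    simp [hcard]
    omega
  obtain ⟨⟨c, hc⟩, hcf, hc0⟩ := Submodule.exists_mem_ne_zero_of_ne_bot hker
  have hcS : ∀ i ∈ S, c i = 0 := fun i hi => congrFun (LinearMap.mem_ker.1 hcf) ⟨i, hi⟩
  have hr := h.le_rankQ hc (fun h' => hc0 (Subtype.ext h'))
  let T := Finset.univ.erase j \ S
  have hT : T.card = n - k := by
    rw [Finset.card_sdiff_of_subset hS, hcard]
    simp
    omega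
  have hmem : ∀ i, i ≠ j → c i ∈ Submodule.span Fq ((T.image c : Finset K) : Set K) := by
    intro i hi
    by_cases hiS : i ∈ S
    · rw [hcS i hiS]; exact Submodule.zero_mem _
    · apply Submodule.subset_span
      simp only [Finset.coe_image]
      exact ⟨i, by simp [T, hi, hiS], rfl⟩
  have hle : Submodule.span Fq (Set.range c) ≤
      Submodule.span Fq ((T.image c : Finset K) : Set K) := by
    rw [Submodule.span_le]
    rintro _ ⟨i, rfl⟩
    by_cases hi : i = j
    · subst hi
      have h1 := ha c hc
      rw [← Finset.add_sum_erase _ _ (Finset.mem_univ i)] at h1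
      have h2 : a i • c i ∈ Submodule.span Fq ((T.image c : Finset K) : Set K) := by
        rw [eq_neg_of_add_eq_zero_left h1]
        exact Submodule.neg_mem _ (Submodule.sum_mem _ fun l hl =>
          Submodule.smul_mem _ _ (hmem l (Finset.ne_of_mem_erase hl)))
      exact (Submodule.smul_mem_iff _ hj).1 h2
    · exact hmem i hi
  have h1 := Submodule.finrank_mono hle
  have h2 := finrank_span_finset_le_card (R := Fq) (T.image c)
  have h3 := Finset.card_image_le (s := T) (f := c)
  unfold rankQ at hr
  unfold Set.finrank at h2
  omega

/-! ### Iterated intersections -/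

/-- The chain `C₀ = C`, `Cᵢ₊₁ = Cᵢ ∩ σ Cᵢ`, so that `Cᵢ = C ∩ σ C ∩ ⋯ ∩ σⁱ C`. -/
def interChain (σ : K ≃ₐ[Fq] K) (C : Submodule K (Fin n → K)) : ℕ → Submodule K (Fin n → K)
  | 0 => C
  | i + 1 => interChain σ C i ⊓ twist σ (interChain σ C i)

theorem interChain_le (σ : K ≃ₐ[Fq] K) (C : Submodule K (Fin n → K)) (i : ℕ) :
    interChain σ C i ≤ C := by
  induction i with
  | zero => exact le_rfl
  | succ i ih => exact inf_le_left.trans ih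

/-- A drop of at most one at the first step of the chain forces the same bound at every step:
`Cᵢ₊₁` and `σ Cᵢ₊₁` are both contained in `σ Cᵢ`. -/
theorem finrank_interChain_le_succ (σ : K ≃ₐ[Fq] K) (C : Submodule K (Fin n → K))
    (h : Module.finrank K C ≤ Module.finrank K (C ⊓ twist σ C : Submodule K (Fin n → K)) + 1)
    (i : ℕ) :
    Module.finrank K (interChain σ C i) ≤ Module.finrank K (interChain σ C (i + 1)) + 1 := by
  induction i with
  | zero => exact h
  | succ i ih =>
    have h1 := Submodule.finrank_sup_add_finrank_inf_eq (interChain σ C (i + 1))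
      (twist σ (interChain σ C (i + 1)))
    have h2 : interChain σ C (i + 1) ⊔ twist σ (interChain σ C (i + 1)) ≤
        twist σ (interChain σ C i) := sup_le inf_le_right (twist_mono inf_le_left)
    have h3 := Submodule.finrank_mono h2
    rw [finrank_twist] at h1 h3
    change _ ≤ Module.finrank K (interChain σ C (i + 1) ⊓ twist σ (interChain σ C (i + 1)) :
      Submodule K (Fin n → K)) + 1
    omega

theorem exists_of_mem_interChain (σ : K ≃ₐ[Fq] K) (C : Submodule K (Fin n → K)) (i : ℕ) :
    ∀ h ∈ interChain σ C i, ∃ g, (vecMap σ)^[i] g = h ∧ ∀ j ≤ i, (vecMap σ)^[j] g ∈ C := by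
  induction i with
  | zero =>
    intro h hh
    refine ⟨h, rfl, fun j hj => ?_⟩
    obtain rfl : j = 0 := by omega
    exact hh
  | succ i ih =>
    intro h hh
    obtain ⟨h', hh', rfl⟩ := mem_twist.1 hh.2
    obtain ⟨g, rfl, hg⟩ := ih h' hh'
    refine ⟨g, Function.iterate_succ_apply' _ _ _, fun j hj => ?_⟩
    rcases Nat.lt_or_ge i j with hij | hij
    · obtain rfl : j = i + 1 := by omega
      rw [Function.iterate_succ_apply']
      exact interChain_le σ C _ hh
    · exact hg j hij

/-- If `C` has no nonzero `σ`-stable subspace, then for `g ≠ 0` the iterates `g, σ g, …`, as long as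
they stay in `C`, are linearly independent: at the first dependence, the span of the preceding iterates is `σ`-stable. -/
theorem linearIndependent_iterate (σ : K ≃ₐ[Fq] K) (C : Submodule K (Fin n → K))
    (hns : ∀ D ≤ C, (∀ d ∈ D, vecMap σ d ∈ D) → D = ⊥)
    (g : Fin n → K) (h0 : g ≠ 0) (k : ℕ) (hg : ∀ j < k, (vecMap σ)^[j] g ∈ C) :
    LinearIndependent K (fun i : Fin k => (vecMap σ)^[i] g) := by
  induction k with
  | zero => exact linearIndependent_empty_type
  | succ k ih =>
    rw [linearIndependent_finSucc']
    refine ⟨ih fun j hj => hg j (by omega), fun hmem => h0 ?_⟩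
    set W := Submodule.span K (Set.range (fun i : Fin k => (vecMap σ)^[i] g)) with hW
    change (vecMap σ)^[k] g ∈ W at hmem
    have hall : ∀ i ≤ k, (vecMap σ)^[i] g ∈ W := by
      intro i hi
      rcases Nat.lt_or_ge i k with h | h
      · exact Submodule.subset_span ⟨⟨i, h⟩, rfl⟩
      · obtain rfl : i = k := by omega
        exact hmem
    have hWC : W ≤ C := by
      rw [hW, Submodule.span_le]
      rintro _ ⟨i, rfl⟩
      exact hg i (by omega)
    have hWt : W ≤ twist σ.symm W := by
      nth_rewrite 1 [hW]
      rw [Submodule.span_le]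
      rintro _ ⟨i, rfl⟩
      change vecMap σ ((vecMap σ)^[i] g) ∈ W
      rw [← Function.iterate_succ_apply' (vecMap σ)]
      exact hall _ (by omega)
    have hbot := hns W hWC (fun d hd => hWt hd)
    have := hall 0 (by omega)
    rwa [hbot, Submodule.mem_bot] at this

/-! ### The two implications for a general automorphism -/

/-- A code of dimension `k` spanned by `g, σ g, …, σ^(k-1) g`, without nonzero `σ`-stable subspaces, meets its twist in
dimension `k - 1`. -/
theorem finrank_inf_twist_of_span (σ : K ≃ₐ[Fq] K) (C : Submodule K (Fin n → K)) {k : ℕ}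
    (hk : 1 ≤ k) (hC : Module.finrank K C = k)
    (hns : ∀ D ≤ C, (∀ d ∈ D, vecMap σ d ∈ D) → D = ⊥) (g : Fin n → K)
    (hg : C = Submodule.span K (Set.range fun i : Fin k => (vecMap σ)^[i] g)) :
    Module.finrank K (C ⊓ twist σ C : Submodule K (Fin n → K)) = k - 1 := by
  have hli : LinearIndependent K (fun i : Fin k => (vecMap σ)^[i] g) := by
    rw [linearIndependent_iff_card_eq_finrank_span, Set.finrank, ← hg, hC, Fintype.card_fin]
  have hmem : ∀ i < k, (vecMap σ)^[i] g ∈ C := fun i hi => by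
    rw [hg]; exact Submodule.subset_span ⟨⟨i, hi⟩, rfl⟩
  have hlow : k - 1 ≤ Module.finrank K (C ⊓ twist σ C : Submodule K (Fin n → K)) := by
    let e : Fin (k - 1) → Fin k := fun i => ⟨i + 1, by omega⟩
    have he : Function.Injective e := fun a b h => by
      have := congrArg Fin.val h
      simp only [e] at this
      exact Fin.ext (by omega)
    have h1 := finrank_span_eq_card (hli.comp e he)
    rw [Fintype.card_fin] at h1
    rw [← h1]
    apply Submodule.finrank_mono
    rw [Submodule.span_le]
    rintro _ ⟨i, rfl⟩
    refine ⟨hmem _ (e i).2, ?_⟩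
    change (vecMap σ)^[i + 1] g ∈ twist σ C
    rw [Function.iterate_succ_apply']
    exact vecMap_mem_twist (hmem _ (by omega))
  have hup : Module.finrank K (C ⊓ twist σ C : Submodule K (Fin n → K)) ≤ k := by
    rw [← hC]; exact Submodule.finrank_mono inf_le_left
  have hne : Module.finrank K (C ⊓ twist σ C : Submodule K (Fin n → K)) ≠ k := by
    intro h
    have h1 : C ⊓ twist σ C = twist σ C :=
      Submodule.eq_of_le_of_finrank_eq inf_le_right (by rw [h, finrank_twist, hC])
    have hbot := hns C le_rfl fun d hd => (h1.ge (vecMap_mem_twist hd)).1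
    rw [hbot, finrank_bot] at hC
    omega
  omega

/-- An MRD code meeting its twist in dimension `k - 1` is spanned by `g, σ g, …, σ^(k-1) g`, where `g`
arises from a nonzero element `σ^(k-1) g` of the `(k - 1)`-st term of `interChain`. -/
theorem IsMRD.exists_cyclic (σ : K ≃ₐ[Fq] K) {C : Submodule K (Fin n → K)} {k : ℕ}
    (hMRD : IsMRD Fq C k) (hk : 1 ≤ k) (hkn : k < n)
    (hns : ∀ D ≤ C, (∀ d ∈ D, vecMap σ d ∈ D) → D = ⊥)
    (h : Module.finrank K (C ⊓ twist σ C : Submodule K (Fin n → K)) = k - 1) :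
    ∃ g : Fin n → K, LinearIndependent Fq g ∧
      C = Submodule.span K (Set.range fun i : Fin k => (vecMap σ)^[i] g) := by
  have hC := hMRD.1
  have hdim : ∀ i, k ≤ Module.finrank K (interChain σ C i) + i := by
    intro i
    induction i with
    | zero => exact hC.ge
    | succ i ih =>
      have := finrank_interChain_le_succ σ C (by omega) i
      omega
  have hbot : interChain σ C (k - 1) ≠ ⊥ := fun hb => by
    have := hdim (k - 1)
    rw [hb, finrank_bot] at this
    omega
  obtain ⟨w, hw, hw0⟩ := Submodule.exists_mem_ne_zero_of_ne_bot hbot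
  obtain ⟨g, hgw, hg⟩ := exists_of_mem_interChain σ C _ w hw
  have hg0 : g ≠ 0 := by
    rintro rfl
    apply hw0
    rw [← hgw]
    ext j
    rw [vecMap_iterate_apply]
    exact Function.iterate_fixed (map_zero σ) _
  have hli := linearIndependent_iterate σ C hns g hg0 k (fun j hj => hg j (by omega))
  have hspan : C = Submodule.span K (Set.range fun i : Fin k => (vecMap σ)^[i] g) := by
    symm
    apply Submodule.eq_of_le_of_finrank_eq
    · rw [Submodule.span_le]
      rintro _ ⟨i, rfl⟩
      exact hg i (by omega)
    · rw [finrank_span_eq_card hli, hC, Fintype.card_fin]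
  refine ⟨g, ?_, hspan⟩
  rw [Fintype.linearIndependent_iff]
  intro a ha
  refine hMRD.no_relation hk hkn a ?_
  have hiter : ∀ i : ℕ, ∑ j, a j • (vecMap σ)^[i] g j = 0 := by
    intro i
    induction i with
    | zero => exact ha
    | succ i ih =>
      have := congrArg σ ih
      rw [map_sum, map_zero] at this
      simp only [map_smul] at this
      simp only [Function.iterate_succ_apply']
      exact this
  intro c hc
  rw [hspan] at hc
  induction hc using Submodule.span_induction with
  | mem x hx => obtain ⟨i, rfl⟩ := hx; exact hiter i
  | zero => simp
  | add x y _ _ hx hy => simp [smul_add, Finset.sum_add_distrib, hx, hy]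
  | smul b x _ hx =>
    have : ∑ j, a j • (b • x) j = b * ∑ j, a j • x j := by
      simp [Finset.mul_sum]
    rw [this, hx, mul_zero]

end Twist

/-! ### The Frobenius power -/

/-- Since `gcd(s, m) = 1`, an element fixed by the `q^s`-power map is fixed by the `q`-power map, which
generates the Galois group of `K` over `Fq`. -/
theorem exists_algebraMap_of_pow_eq {q m s : ℕ} {Fq K : Type} [Field Fq] [Fintype Fq] [Field K]
    [Fintype K] [Algebra Fq K] (hq : Fintype.card Fq = q) (hK : Fintype.card K = q ^ m)
    (hgcd : Nat.gcd s m = 1) (x : K) (hx : x ^ q ^ s = x) : ∃ a : Fq, algebraMap Fq K a = x := by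
  have h1 : Function.IsPeriodicPt (fun y : K => y ^ q) s x := by
    rw [Function.IsPeriodicPt, pow_iterate]; exact hx
  have h2 : Function.IsPeriodicPt (fun y : K => y ^ q) m x := by
    rw [Function.IsPeriodicPt, pow_iterate, ← hK]; exact FiniteField.pow_card x
  have h3 : Function.IsPeriodicPt (fun y : K => y ^ q) 1 x := hgcd ▸ h1.gcd h2
  have h4 : x ∈ (⊥ : IntermediateField Fq K) := by
    rw [IsGalois.mem_bot_iff_fixed]
    intro f
    obtain ⟨i, rfl⟩ := (FiniteField.bijective_frobeniusAlgEquivOfAlgebraic_pow Fq K).2 f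
    simp only [AlgEquiv.coe_pow, FiniteField.coe_frobeniusAlgEquivOfAlgebraic, hq]
    exact Function.iterate_fixed h3 _
  exact IntermediateField.mem_bot.1 h4

/-- for a linear MRD code `C` of dimension `1 ≤ k < n` and `gcd(s,m) = 1`,
`dim(C ∩ C^[s]) = k - 1` iff `C` is a generalized Gabidulin code with parameter `s`. -/
theorem stmt10 {q m s n k : ℕ} (Fq K : Type) [Field Fq] [Fintype Fq] [Field K] [Fintype K]
    [Algebra Fq K] (hq : Fintype.card Fq = q) (hK : Fintype.card K = q ^ m)
    (hs : 0 < s) (hgcd : Nat.gcd s m = 1) (hk : 1 ≤ k) (hkn : k < n)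
    (C : Submodule K (Fin n → K)) (hMRD : IsMRD Fq C k) :
    Module.finrank K
        (C ⊓ Submodule.span K
          ((fun v : Fin n → K => fun j => (v j) ^ q ^ s) '' (C : Set (Fin n → K))) :
        Submodule K (Fin n → K)) = k - 1 ↔
      ∃ g : Fin n → K, LinearIndependent Fq g ∧
        C = Submodule.span K
          (Set.range fun i : Fin k => fun j : Fin n => (g j) ^ q ^ (s * (i : ℕ))) := by
  let σ : K ≃ₐ[Fq] K := FiniteField.frobeniusAlgEquivOfAlgebraic Fq K ^ s
  have hσ : ∀ x, σ x = x ^ q ^ s := fun x => by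
    simp only [σ, AlgEquiv.coe_pow, FiniteField.coe_frobeniusAlgEquivOfAlgebraic, hq, pow_iterate]
  have hvec : (fun v : Fin n → K => fun j => (v j) ^ q ^ s) = vecMap σ := by
    ext v j; simp only [vecMap, hσ]
  have hmoore : ∀ g : Fin n → K, (fun i : Fin k => fun j : Fin n => (g j) ^ q ^ (s * (i : ℕ))) =
      fun i : Fin k => (vecMap σ)^[i] g := by
    intro g
    ext i j
    rw [vecMap_iterate_apply, funext hσ, pow_iterate, pow_mul]
  have hns := not_stable_of_forall_rank σ
    (fun x hx => exists_algebraMap_of_pow_eq hq hK hgcd x ((hσ x).symm.trans hx)) C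
    (fun c hc h0 => by have := hMRD.le_rankQ hc h0; omega)
  rw [hvec, span_image_eq_twist]
  simp only [hmoore]
  constructor
  · exact hMRD.exists_cyclic σ hk hkn hns
  · rintro ⟨g, -, hg⟩
    exact finrank_inf_twist_of_span σ C hk hMRD.1 hns g hg
end

section
/- Let q = 2, m = 4, n = 4, and let C ⊆ F_{2^4}^4 be a linear MRD code of dimension k over F_{2^4} with 1 ≤ k ≤ 3. Then C is a Gabidulin code: there exist g_1, g_2, g_3, g_4 ∈ F_{2^4} linearly independent over F_2 such that C is the F_{2^4}-span of the k Moore vectors (g_1^{2^i}, g_2^{2^i}, g_3^{2^i}, g_4^{2^i}) for i = 0, …, k − 1. -/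
/-!
A code of dimension `k` over `K = F_16` is treated through its words of maximal rank.  A vector
`v ∈ K^4` has rank `4` exactly when it is independent over `F_2`, and then its four Moore vectors
`v, v^2, v^4, v^8` form a `K`-basis of `K^4`: a `2`-polynomial of degree at most `8` that kills `v`
vanishes on all `16` elements of `K`.

* `k = 1`: a generator of `C` has rank `4`, and it serves as `g`.
* `k = 3`: `C` is the orthogonal space of some `h`.  An `F_2`-relation of `h` would be a codeword of
  rank `1`, so `h` has rank `4`.  A nonzero `g` orthogonal to `h, h^8, h^4` has `g, g^2, g^4` in `C`.
  If `a ∈ F_2^4` is orthogonal to `g`, then `a` is a combination of `h, h^4, h^8`; as `a` is fixed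
  by Frobenius, all coefficients vanish, so `g` has rank `4`.
* `k = 2`: a nonzero `u ∈ F_2^4` is a relation of at most one of the `17` projective points of `C`,
  since two relations force rank at most `2`.  There are `15` such `u`, so two of the points, spanned
  by `v` and `w`, have rank `4`.  Write `w = f(v)` with `f = a₀ x + a₁ x^2 + a₂ x^4 + a₃ x^8`.  The
  rank condition on `w - c v` says that `f(x)/x` permutes `K^*`, so the power sums of
  `a₀ + a₁ x + a₂ x^3 + a₃ x^7` over `K^*` with exponents `1, 3, 5` vanish, as in Hermite's criterion.
  These sums are, up to sign, `a₀`, `a₁ a₃^2` and `a₂^5`.  So `f` is `a x^2` or `a x^8`, and `C` is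
  the Gabidulin code of `v` or of `v^8`.
-/

open Matrix

section Helpers

set_option linter.unusedSectionVars false

variable {Fq K : Type} [Field Fq] [Fintype Fq] [Field K] [Fintype K] [Algebra Fq K]

/-! ### The fields `F_2` and `F_16` -/

lemma fq_eq_zero_or_one (hq : Fintype.card Fq = 2) (a : Fq) : a = 0 ∨ a = 1 := by
  have h := FiniteField.pow_card a
  rw [hq] at h
  have : a * (a - 1) = 0 := by linear_combination h
  rcases mul_eq_zero.1 this with h | h
  · exact Or.inl h
  · exact Or.inr (sub_eq_zero.1 h)

lemma finrank_eq_four (hq : Fintype.card Fq = 2) (hK : Fintype.card K = 2 ^ 4) :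
    Module.finrank Fq K = 4 := by
  have h := Module.card_eq_pow_finrank (K := Fq) (V := K)
  rw [hq, hK] at h
  exact (Nat.pow_right_injective (le_refl 2) h).symm

lemma charTwo_of_card (hK : Fintype.card K = 2 ^ 4) : CharP K 2 := by
  have : Fact (Nat.Prime 2) := ⟨Nat.prime_two⟩
  exact charP_of_card_eq_prime_pow hK

lemma sum_smul_pow (hq : Fintype.card Fq = 2) [CharP K 2] (u : Fin 4 → Fq) (v : Fin 4 → K)
    (i : ℕ) : (∑ j, u j • v j) ^ 2 ^ i = ∑ j, u j • v j ^ 2 ^ i := by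
  have : Fact (Nat.Prime 2) := ⟨Nat.prime_two⟩
  rw [sum_pow_char_pow]
  refine Finset.sum_congr rfl fun j _ => ?_
  rw [smul_pow]
  rcases fq_eq_zero_or_one hq (u j) with h | h <;> simp [h]

lemma exists_coeff (hq : Fintype.card Fq = 2) (hK : Fintype.card K = 2 ^ 4) {v : Fin 4 → K}
    (hv : LinearIndependent Fq v) (x : K) : ∃ u : Fin 4 → Fq, x = ∑ j, u j • v j := by
  have hs := hv.span_eq_top_of_card_eq_finrank' (by simp [finrank_eq_four hq hK])
  have hx : x ∈ Submodule.span Fq (Set.range v) := hs ▸ Submodule.mem_top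
  obtain ⟨u, hu⟩ := (Submodule.mem_span_range_iff_exists_fun Fq).1 hx
  exact ⟨u, hu.symm⟩

/-! ### Moore vectors -/

/-- The Moore vectors of an `F_2`-independent vector are independent over `K`: a `2`-polynomial of
degree at most `8` vanishing on `v` has all of `K` among its roots. -/
lemma moore_linearIndependent (hq : Fintype.card Fq = 2) (hK : Fintype.card K = 2 ^ 4)
    {v : Fin 4 → K} (hv : LinearIndependent Fq v) :
    LinearIndependent K (fun i : Fin 4 => fun j : Fin 4 => v j ^ 2 ^ (i : ℕ)) := by
  have := charTwo_of_card hK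
  rw [Fintype.linearIndependent_iff]
  intro c hc
  have hc' : ∀ j, ∑ i : Fin 4, c i * v j ^ 2 ^ (i : ℕ) = 0 := by
    intro j
    simpa using congrFun hc j
  have hall : ∀ x : K, ∑ i : Fin 4, c i * x ^ 2 ^ (i : ℕ) = 0 := by
    intro x
    obtain ⟨u, rfl⟩ := exists_coeff hq hK hv x
    simp_rw [sum_smul_pow hq, Finset.mul_sum, mul_smul_comm]
    rw [Finset.sum_comm]
    simp_rw [← Finset.smul_sum, hc', smul_zero, Finset.sum_const_zero]
  let p : Polynomial K := ∑ i : Fin 4, Polynomial.C (c i) * Polynomial.X ^ 2 ^ (i : ℕ)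
  have hp : p = 0 := by
    refine Polynomial.eq_zero_of_natDegree_lt_card_of_eval_eq_zero p (f := id)
      Function.injective_id (fun x => ?_) ?_
    · simpa [p, Polynomial.eval_finsetSum] using hall x
    · have : p.natDegree ≤ 8 := by
        refine Polynomial.natDegree_sum_le_of_forall_le _ _ fun i _ => ?_
        refine (Polynomial.natDegree_C_mul_X_pow_le _ _).trans ?_
        fin_cases i <;> norm_num
      rw [hK]
      omega
  intro i
  have := congrArg (fun p => Polynomial.coeff p (2 ^ (i : ℕ))) hp
  fin_cases i <;>
    simpa [p, Fin.sum_univ_four, Polynomial.coeff_X, Polynomial.coeff_X_pow,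
      Polynomial.coeff_C_mul] using this

lemma moore_span (hq : Fintype.card Fq = 2) (hK : Fintype.card K = 2 ^ 4)
    {v : Fin 4 → K} (hv : LinearIndependent Fq v) (w : Fin 4 → K) :
    ∃ c : Fin 4 → K, ∀ j, w j = c 0 * v j + c 1 * v j ^ 2 + c 2 * v j ^ 4 + c 3 * v j ^ 8 := by
  have hs := (moore_linearIndependent hq hK hv).span_eq_top_of_card_eq_finrank' (by simp)
  have hx : w ∈ Submodule.span K (Set.range (fun i : Fin 4 => fun j : Fin 4 => v j ^ 2 ^ (i : ℕ))) :=
    hs ▸ Submodule.mem_top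
  obtain ⟨c, hc⟩ := (Submodule.mem_span_range_iff_exists_fun K).1 hx
  refine ⟨c, fun j => ?_⟩
  rw [← hc]
  simp [Fin.sum_univ_four]

/-- If `g` has rank `4` and its first `k` Moore vectors lie in a `k`-dimensional code, they span
the code. -/
lemma eq_span_moore (hq : Fintype.card Fq = 2) (hK : Fintype.card K = 2 ^ 4) {k : ℕ} (hk : k ≤ 4)
    {C : Submodule K (Fin 4 → K)} (hC : Module.finrank K C = k) {g : Fin 4 → K}
    (hg : LinearIndependent Fq g)
    (hmem : ∀ i : Fin k, (fun j : Fin 4 => g j ^ 2 ^ (i : ℕ)) ∈ C) :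
    C = Submodule.span K (Set.range fun i : Fin k => fun j : Fin 4 => g j ^ 2 ^ (i : ℕ)) := by
  symm
  apply Submodule.eq_of_le_of_finrank_eq
  · rw [Submodule.span_le]
    rintro _ ⟨i, rfl⟩
    exact hmem i
  · have := (moore_linearIndependent hq hK hg).comp (Fin.castLE hk) (Fin.castLE_injective hk)
    rw [hC]
    exact (finrank_span_eq_card this).trans (Fintype.card_fin k)

/-! ### Rank and relations over `F_2` -/

lemma linearIndependent_of_rankQ {v : Fin 4 → K} (h : 4 ≤ rankQ Fq v) :
    LinearIndependent Fq v := by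
  rw [linearIndependent_iff_card_le_finrank_span]
  simpa [rankQ, Set.finrank] using h

/-- Over `F_2`, two distinct nonzero relations between the coordinates are independent, so they
bring the rank down to at most `2`. -/
lemma rankQ_le_two (hq : Fintype.card Fq = 2) (c : Fin 4 → K) {u u' : Fin 4 → Fq} (hu : u ≠ 0)
    (hu' : u' ≠ 0) (hne : u ≠ u') (h : ∑ j, u j • c j = 0) (h' : ∑ j, u' j • c j = 0) :
    rankQ Fq c ≤ 2 := by
  have hr := LinearMap.finrank_range_add_finrank_ker (Fintype.linearCombination Fq c)
  rw [Fintype.range_linearCombination] at hr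
  have hk : ¬ Module.finrank Fq (LinearMap.ker (Fintype.linearCombination Fq c)) ≤ 1 := by
    intro hle
    obtain ⟨⟨z, hz⟩, hz'⟩ := finrank_le_one_iff.1 hle
    have key : ∀ t : Fin 4 → Fq, t ≠ 0 → ∑ j, t j • c j = 0 → t = z := by
      intro t ht h0
      obtain ⟨a, ha⟩ := hz' ⟨t, by simpa [Fintype.linearCombination_apply] using h0⟩
      have ha : a • z = t := congrArg Subtype.val ha
      rcases fq_eq_zero_or_one hq a with rfl | rfl
      · simp at ha; exact absurd ha.symm ht
      · simpa using ha.symm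
    exact hne ((key u hu h).trans (key u' hu' h').symm)
  simp at hr
  unfold rankQ
  omega

lemma rankQ_of_mem {k : ℕ} {C : Submodule K (Fin 4 → K)} (h : IsMRD Fq C k) {c : Fin 4 → K}
    (hc : c ∈ C) (h0 : c ≠ 0) : 4 - k + 1 ≤ rankQ Fq c := by
  rw [← h.2]
  exact Nat.sInf_le ⟨c, ⟨hc, h0⟩, rfl⟩

/-! ### Codes of dimension one and three -/

lemma gabidulin_one (hq : Fintype.card Fq = 2) (hK : Fintype.card K = 2 ^ 4)
    (C : Submodule K (Fin 4 → K)) (hMRD : IsMRD Fq C 1) :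
    ∃ g : Fin 4 → K, LinearIndependent Fq g ∧
      C = Submodule.span K
        (Set.range fun i : Fin 1 => fun j : Fin 4 => (g j) ^ 2 ^ (i : ℕ)) := by
  have hne : C ≠ ⊥ := by
    rintro rfl
    simpa using hMRD.1
  obtain ⟨v, hv, hv0⟩ := C.ne_bot_iff.1 hne
  have hg : LinearIndependent Fq v := linearIndependent_of_rankQ (rankQ_of_mem hMRD hv hv0)
  refine ⟨v, hg, eq_span_moore hq hK (by norm_num) hMRD.1 hg fun i => ?_⟩
  simpa [Subsingleton.elim i 0] using hv

lemma gabidulin_three (hq : Fintype.card Fq = 2) (hK : Fintype.card K = 2 ^ 4)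
    (C : Submodule K (Fin 4 → K)) (hMRD : IsMRD Fq C 3) :
    ∃ g : Fin 4 → K, LinearIndependent Fq g ∧
      C = Submodule.span K
        (Set.range fun i : Fin 3 => fun j : Fin 4 => (g j) ^ 2 ^ (i : ℕ)) := by
  have : Fact (Nat.Prime 2) := ⟨Nat.prime_two⟩
  have := charTwo_of_card hK
  have h16 : ∀ x : K, x ^ 16 = x := fun x => by
    have := FiniteField.pow_card x
    rwa [hK] at this
  obtain ⟨h, h0, hC⟩ : ∃ h : Fin 4 → K, h ≠ 0 ∧ ∀ c, c ∈ C ↔ ∑ j, c j * h j = 0 := by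
    have hlt : C < ⊤ := by
      refine lt_top_iff_ne_top.2 ?_
      rintro rfl
      simpa using hMRD.1
    obtain ⟨f, hf0, hf⟩ := Submodule.exists_le_ker_of_lt_top C hlt
    have hfe : ∀ c : Fin 4 → K, f c = ∑ j, c j * f (Pi.single j 1) := fun c => by
      rw [LinearMap.pi_apply_eq_sum_univ f c]
      refine Finset.sum_congr rfl fun j _ => ?_
      rw [smul_eq_mul]
      congr 2
      ext l
      simp [Pi.single_apply, eq_comm]
    refine ⟨fun j => f (Pi.single j 1), ?_, fun c => ?_⟩
    · intro hz
      apply hf0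
      ext c
      simpa using congrFun hz c
    · have hker : C = LinearMap.ker f := by
        apply Submodule.eq_of_le_of_finrank_eq hf
        have h1 := LinearMap.finrank_range_add_finrank_ker f
        rw [LinearMap.range_eq_top.2 (LinearMap.surjective hf0)] at h1
        simp at h1
        rw [hMRD.1]
        omega
      rw [hker, LinearMap.mem_ker, hfe]
  -- an `F_2`-relation of `h`, read as a vector over `K`, is a codeword of rank at most `1`
  have hh : LinearIndependent Fq h := by
    rw [Fintype.linearIndependent_iff]
    by_contra! hcon
    obtain ⟨u, hu, i, hi⟩ := hcon
    have hmem : (fun j => algebraMap Fq K (u j)) ∈ C := by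
      rw [hC]
      simpa [Algebra.smul_def] using hu
    have hr := rankQ_of_mem hMRD hmem (fun hz => hi (by simpa using congrFun hz i))
    have : rankQ Fq (fun j => algebraMap Fq K (u j)) ≤ 1 := by
      unfold rankQ
      have hle : Submodule.span Fq (Set.range fun j => algebraMap Fq K (u j)) ≤
          Submodule.span Fq {(1 : K)} := by
        rw [Submodule.span_le]
        rintro _ ⟨j, rfl⟩
        exact Submodule.mem_span_singleton.2 ⟨u j, by simp [Algebra.smul_def]⟩
      exact (Submodule.finrank_mono hle).trans ((finrank_span_le_card _).trans (by simp))
    omega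
  obtain ⟨g, hg0, hg⟩ : ∃ g : Fin 4 → K, g ≠ 0 ∧
      (∑ j, g j * h j = 0 ∧ ∑ j, g j * h j ^ 8 = 0 ∧ ∑ j, g j * h j ^ 4 = 0) := by
    let M : Matrix (Fin 3) (Fin 4) K := ![h, fun j => h j ^ 8, fun j => h j ^ 4]
    obtain ⟨g, hg, hg0⟩ := (Submodule.ne_bot_iff _).1
      (LinearMap.ker_ne_bot_of_finrank_lt (f := M.mulVecLin) (by simp))
    have hg : M *ᵥ g = 0 := hg
    have e : ∀ i, ∑ j, g j * M i j = 0 := fun i => by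
      simpa [Matrix.mulVec, dotProduct, mul_comm] using congrFun hg i
    exact ⟨g, hg0, e 0, e 1, e 2⟩
  have hg2 : ∑ j, g j * h j ^ 2 ≠ 0 := by
    intro hz
    apply hg0
    ext l
    obtain ⟨c, hc⟩ := moore_span hq hK hh (Pi.single l 1)
    have : g l = ∑ j, g j * (Pi.single l 1 : Fin 4 → K) j := by simp [Pi.single_apply]
    rw [this]
    have e : ∀ j, g j * (Pi.single l 1 : Fin 4 → K) j = c 0 * (g j * h j) + c 1 * (g j * h j ^ 2)
        + c 2 * (g j * h j ^ 4) + c 3 * (g j * h j ^ 8) := fun j => by rw [hc]; ring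
    simp only [e, Finset.sum_add_distrib, ← Finset.mul_sum, hg.1, hg.2.1, hg.2.2, hz]
    simp
  have hgi : LinearIndependent Fq g := by
    rw [Fintype.linearIndependent_iff]
    intro u hu
    obtain ⟨c, hc⟩ := moore_span hq hK hh (fun j => algebraMap Fq K (u j))
    have hc1 : c 1 = 0 := by
      have e : ∀ j, u j • g j = c 0 * (g j * h j) + c 1 * (g j * h j ^ 2)
        + c 2 * (g j * h j ^ 4) + c 3 * (g j * h j ^ 8) := fun j => by
        rw [Algebra.smul_def, hc]; ring
      simp only [e, Finset.sum_add_distrib, ← Finset.mul_sum, hg.1, hg.2.1, hg.2.2] at hu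
      simpa [hg2] using hu
    -- `u` is fixed by Frobenius, which permutes the Moore vectors of `h` cyclically
    have hfix := Fintype.linearIndependent_iff.1 (moore_linearIndependent hq hK hh)
      ![c 0 - c 3 ^ 2, c 1 - c 0 ^ 2, c 2 - c 1 ^ 2, c 3 - c 2 ^ 2] (by
        ext j
        have hsq : (algebraMap Fq K (u j)) ^ 2 = algebraMap Fq K (u j) := by
          rcases fq_eq_zero_or_one hq (u j) with h | h <;> simp [h]
        have hc' := hc j
        rw [hc', add_pow_char, add_pow_char, add_pow_char] at hsq
        simp [Fin.sum_univ_four]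
        linear_combination -hsq + (c 3) ^ 2 * h16 (h j))
    have e1 := hfix 1
    have e2 := hfix 2
    have e3 := hfix 3
    simp [hc1] at e1 e2
    simp [e2] at e3
    intro j
    have := hc j
    simpa [e1, hc1, e2, e3] using this
  refine ⟨g, hgi, eq_span_moore hq hK (by norm_num) hMRD.1 hgi fun i => ?_⟩
  rw [hC]
  -- `(g^(2^i) · h)^(2^(4-i)) = g · h^(2^(4-i))`
  have hpow : ∀ i ≤ 4, ∑ j, g j * h j ^ 2 ^ (4 - i) = 0 →
      ∑ j, g j ^ 2 ^ i * h j = 0 := by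
    intro i hi hz
    refine eq_zero_of_pow_eq_zero (n := 2 ^ (4 - i)) ?_
    rw [sum_pow_char_pow, ← hz]
    refine Finset.sum_congr rfl fun j _ => ?_
    rw [mul_pow, ← pow_mul, ← pow_add, Nat.add_sub_cancel' hi, show 2 ^ 4 = 16 from rfl, h16]
  fin_cases i
  · simpa using hg.1
  · exact hpow 1 (by norm_num) (by simpa using hg.2.1)
  · exact hpow 2 (by norm_num) (by simpa using hg.2.2)

/-! ### Codes of dimension two -/

/-- A permutation of `K^*` given by `x ↦ a₀ + a₁ x + a₂ x^3 + a₃ x^7` is a monomial `a₁ x`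
or `a₃ x^7`; the power sums with exponents `1`, `5` and `3` isolate `a₀`, `a₂^5` and `a₁ a₃^2`. -/
lemma coeff_of_injective (hK : Fintype.card K = 2 ^ 4) {a : Fin 4 → K} (φ : Kˣ → Kˣ)
    (hφ : Function.Injective φ)
    (hval : ∀ x : Kˣ, (φ x : K) = a 0 + a 1 * (x : K) + a 2 * (x : K) ^ 3 + a 3 * (x : K) ^ 7) :
    a 0 = 0 ∧ a 2 = 0 ∧ (a 1 = 0 ∨ a 3 = 0) := by
  classical
  have : Fact (Nat.Prime 2) := ⟨Nat.prime_two⟩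
  have := charTwo_of_card hK
  have hbij : Function.Bijective φ := Finite.injective_iff_bijective.1 hφ
  have hps : ∀ i : ℕ, ∑ x : Kˣ, (x : K) ^ i = if 15 ∣ i then -1 else 0 := by
    intro i
    have := FiniteField.sum_pow_units K i
    rw [hK] at this
    simpa using this
  have hsum : ∀ t : ℕ, ¬ 15 ∣ t → ∑ x : Kˣ, (φ x : K) ^ t = 0 := by
    intro t ht
    rw [hbij.sum_comp (fun y : Kˣ => (y : K) ^ t), hps, if_neg ht]
  have h0 : a 0 = 0 := by
    have h := hsum 1 (by norm_num)
    have e : ∀ x : Kˣ, (φ x : K) ^ 1 = a 0 * (x : K) ^ 0 + a 1 * (x : K) ^ 1 + a 2 * (x : K) ^ 3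
        + a 3 * (x : K) ^ 7 := fun x => by rw [hval]; ring
    simp only [e, Finset.sum_add_distrib, ← Finset.mul_sum, hps] at h
    norm_num at h
    exact h
  have hval2 : ∀ x : Kˣ, (φ x : K) ^ 2 = a 1 ^ 2 * (x : K) ^ 2 + a 2 ^ 2 * (x : K) ^ 6
      + a 3 ^ 2 * (x : K) ^ 14 := fun x => by
    rw [hval, h0, add_pow_char, add_pow_char]; ring
  have hval4 : ∀ x : Kˣ, (φ x : K) ^ 4 = a 1 ^ 4 * (x : K) ^ 4 + a 2 ^ 4 * (x : K) ^ 12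
      + a 3 ^ 4 * (x : K) ^ 28 := fun x => by
    change (φ x : K) ^ (2 * 2) = _
    rw [pow_mul (φ x : K) 2 2, hval2, add_pow_char, add_pow_char]; ring
  refine ⟨h0, ?_, ?_⟩
  · have h := hsum 5 (by norm_num)
    have e : ∀ x : Kˣ, (φ x : K) ^ 5 =
        a 1 ^ 5 * (x : K) ^ 5 + a 1 * a 2 ^ 4 * (x : K) ^ 13 + a 1 * a 3 ^ 4 * (x : K) ^ 29
        + (a 2 * a 1 ^ 4 * (x : K) ^ 7 + a 2 ^ 5 * (x : K) ^ 15 + a 2 * a 3 ^ 4 * (x : K) ^ 31)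
        + (a 3 * a 1 ^ 4 * (x : K) ^ 11 + a 3 * a 2 ^ 4 * (x : K) ^ 19 + a 3 ^ 5 * (x : K) ^ 35) :=
      fun x => by rw [pow_succ, hval4, hval, h0]; ring
    simp only [e, Finset.sum_add_distrib, ← Finset.mul_sum, hps] at h
    norm_num at h
    exact h
  · have h := hsum 3 (by norm_num)
    have e : ∀ x : Kˣ, (φ x : K) ^ 3 =
        a 1 ^ 3 * (x : K) ^ 3 + a 1 * a 2 ^ 2 * (x : K) ^ 7 + a 1 * a 3 ^ 2 * (x : K) ^ 15
        + (a 2 * a 1 ^ 2 * (x : K) ^ 5 + a 2 ^ 3 * (x : K) ^ 9 + a 2 * a 3 ^ 2 * (x : K) ^ 17)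
        + (a 3 * a 1 ^ 2 * (x : K) ^ 9 + a 3 * a 2 ^ 2 * (x : K) ^ 13 + a 3 ^ 3 * (x : K) ^ 21) :=
      fun x => by rw [pow_succ, hval2, hval, h0]; ring
    simp only [e, Finset.sum_add_distrib, ← Finset.mul_sum, hps] at h
    norm_num at h
    exact h

/-- The points of the projective line of a two-dimensional code `C`, indexed by `K` together with
the point at infinity `none`, with a representing codeword chosen for each. -/
lemma exists_points (C : Submodule K (Fin 4 → K)) (hC : Module.finrank K C = 2) :
    ∃ P : Option K → (Fin 4 → K), (∀ o, P o ∈ C) ∧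
      ∀ o o', o ≠ o' → ∀ s s' : K, s • P o = s' • P o' → s = 0 ∧ s' = 0 := by
  let b := Module.finBasisOfFinrankEq K C hC
  have hb := b.linearIndependent.map' C.subtype C.ker_subtype
  obtain ⟨x, y, hx, hy, hxy⟩ : ∃ x y : Fin 4 → K, x ∈ C ∧ y ∈ C ∧
      ∀ s t : K, s • x + t • y = 0 → s = 0 ∧ t = 0 := by
    refine ⟨b 0, b 1, (b 0).2, (b 1).2, fun s t hst => ?_⟩
    have := Fintype.linearIndependent_iff.1 hb ![s, t] (by simpa [Fin.sum_univ_two] using hst)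
    exact ⟨this 0, this 1⟩
  clear_value b
  clear hb b
  refine ⟨fun o => o.elim y (fun t => x + t • y), ?_, ?_⟩
  · rintro (_ | t)
    · exact hy
    · exact C.add_mem hx (C.smul_mem t hy)
  · rintro (_ | t) (_ | t') hne s s' h
    · exact absurd rfl hne
    · simp only [Option.elim_none, Option.elim_some] at h
      obtain ⟨h1, h2⟩ := hxy s' (s' * t' - s) (by rw [sub_smul, h]; module)
      exact ⟨by linear_combination t' * h1 - h2, h1⟩
    · simp only [Option.elim_none, Option.elim_some] at h
      obtain ⟨h1, h2⟩ := hxy s (s * t - s') (by rw [sub_smul, ← h]; module)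
      exact ⟨h1, by linear_combination t * h1 - h2⟩
    · simp only [Option.elim_some] at h
      obtain ⟨h1, h2⟩ := hxy (s - s') (s * t - s' * t') (by
        rw [← sub_eq_zero] at h
        rw [← h]; module)
      obtain rfl := sub_eq_zero.1 h1
      have h3 : s * (t - t') = 0 := by linear_combination h2
      have h4 : t - t' ≠ 0 := fun hz => hne (by rw [sub_eq_zero.1 hz])
      have := (mul_eq_zero.1 h3).resolve_right h4
      exact ⟨this, this⟩

/-- A two-dimensional code with minimum rank at least `3` has two non-proportional words of
rank `4`: each of the `15` nonzero vectors of `F_2^4` spoils at most one of the `17` projective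
points of the code. -/
lemma exists_two_full_rank (hq : Fintype.card Fq = 2) (hK : Fintype.card K = 2 ^ 4)
    (C : Submodule K (Fin 4 → K)) (hMRD : IsMRD Fq C 2) :
    ∃ v w : Fin 4 → K, v ∈ C ∧ w ∈ C ∧ LinearIndependent Fq v ∧ LinearIndependent Fq w ∧
      ∀ c : K, w ≠ c • v := by
  classical
  obtain ⟨P, hPC, hPind⟩ := exists_points C hMRD.1
  have hP0 : ∀ o, P o ≠ 0 := by
    intro o ho
    obtain ⟨o', ho'⟩ := exists_ne o
    exact one_ne_zero (hPind o o' ho'.symm 1 0 (by simp [ho])).1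
  have hrel : ∀ o, ¬ LinearIndependent Fq (P o) →
      ∃ u : Fin 4 → Fq, u ≠ 0 ∧ ∑ j, u j • P o j = 0 := by
    intro o ho
    rw [Fintype.linearIndependent_iff] at ho
    push Not at ho
    obtain ⟨u, hu, i, hi⟩ := ho
    exact ⟨u, fun hz => hi (by simp [hz]), hu⟩
  choose! U hU0 hU using hrel
  -- a vector `u` annihilating two points annihilates `C`, and any other `u'` annihilates some
  -- nonzero codeword, which would have rank at most `2`
  have hinj : ∀ u : Fin 4 → Fq, u ≠ 0 → ∀ o o', o ≠ o' → ∑ j, u j • P o j = 0 →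
      ∑ j, u j • P o' j = 0 → False := by
    intro u hu o o' hne h h'
    obtain ⟨u', hu', hne'⟩ : ∃ u' : Fin 4 → Fq, u' ≠ 0 ∧ u ≠ u' := by
      by_cases h1 : u = Pi.single 0 1
      · refine ⟨Pi.single 1 1, by simp, ?_⟩
        rw [h1]
        intro hz
        simpa using congrFun hz 0
      · exact ⟨Pi.single 0 1, by simp, h1⟩
    let α := ∑ j, u' j • P o j
    let β := ∑ j, u' j • P o' j
    have hlin : ∀ (t : Fin 4 → Fq) (x y : K), ∑ j, t j • (x • P o - y • P o') j =
        x * ∑ j, t j • P o j - y * ∑ j, t j • P o' j := by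
      intro t x y
      simp only [Pi.sub_apply, Pi.smul_apply, smul_eq_mul, smul_sub, Finset.sum_sub_distrib,
        Finset.mul_sum, mul_smul_comm]
    obtain ⟨x, y, hxy, hz⟩ : ∃ x y : K, ¬ (x = 0 ∧ y = 0) ∧ x * α - y * β = 0 := by
      by_cases hβ : β = 0
      · exact ⟨0, 1, by simp, by simp [hβ]⟩
      · exact ⟨β, α, fun hh => hβ hh.1, by ring⟩
    have hr := rankQ_of_mem hMRD (c := x • P o - y • P o')
      (C.sub_mem (C.smul_mem _ (hPC o)) (C.smul_mem _ (hPC o')))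
      (fun hz => hxy (hPind o o' hne x y (sub_eq_zero.1 hz)))
    have hr2 := rankQ_le_two hq (x • P o - y • P o') hu hu' hne' (by rw [hlin, h, h']; simp)
      (by rw [hlin]; exact hz)
    omega
  let B : Finset (Option K) := Finset.univ.filter fun o => ¬ LinearIndependent Fq (P o)
  have hB : B.card ≤ 15 := by
    have hc : (Finset.univ.erase (0 : Fin 4 → Fq)).card = 15 := by
      rw [Finset.card_erase_of_mem (Finset.mem_univ _), Finset.card_univ, Fintype.card_fun, hq]
      rfl
    rw [← hc]
    refine Finset.card_le_card_of_injOn U (fun o ho => ?_) (fun o ho o' ho' he => ?_)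
    · simp only [B, Finset.coe_filter, Finset.mem_univ, true_and, Set.mem_ofPred_eq] at ho
      simpa using hU0 o ho
    · simp only [B, Finset.coe_filter, Finset.mem_univ, true_and, Set.mem_ofPred_eq] at ho ho'
      by_contra hne
      exact hinj (U o) (hU0 o ho) o o' hne (hU o ho) (he ▸ hU o' ho')
  have hG : 1 < (Finset.univ.filter fun o => LinearIndependent Fq (P o)).card := by
    have := Finset.card_filter_add_card_filter_not (s := (Finset.univ : Finset (Option K)))
      (fun o => LinearIndependent Fq (P o))
    rw [Finset.card_univ, Fintype.card_option, hK] at this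
    change _ + B.card = _ at this
    omega
  obtain ⟨o, ho, o', ho', hne⟩ := Finset.one_lt_card.1 hG
  simp only [Finset.mem_filter, Finset.mem_univ, true_and] at ho ho'
  refine ⟨P o, P o', hPC o, hPC o', ho, ho', fun c hc => ?_⟩
  exact one_ne_zero (hPind o o' hne c 1 (by rw [one_smul, hc])).2

lemma gabidulin_two (hq : Fintype.card Fq = 2) (hK : Fintype.card K = 2 ^ 4)
    (C : Submodule K (Fin 4 → K)) (hMRD : IsMRD Fq C 2) :
    ∃ g : Fin 4 → K, LinearIndependent Fq g ∧
      C = Submodule.span K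
        (Set.range fun i : Fin 2 => fun j : Fin 4 => (g j) ^ 2 ^ (i : ℕ)) := by
  have := charTwo_of_card hK
  have h16 : ∀ x : K, x ^ 16 = x := fun x => by
    have := FiniteField.pow_card x
    rwa [hK] at this
  obtain ⟨v, w, hvC, hwC, hv, hw, hvw⟩ := exists_two_full_rank hq hK C hMRD
  obtain ⟨a, ha⟩ := moore_span hq hK hv w
  let f : K → K := fun x => a 0 * x + a 1 * x ^ 2 + a 2 * x ^ 4 + a 3 * x ^ 8
  have hf : ∀ u : Fin 4 → Fq, f (∑ j, u j • v j) = ∑ j, u j • w j := by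
    intro u
    have e1 := sum_smul_pow hq u v 1
    have e2 := sum_smul_pow hq u v 2
    have e3 := sum_smul_pow hq u v 3
    norm_num at e1 e2 e3
    simp only [f, e1, e2, e3, ha, smul_add, Finset.sum_add_distrib, Finset.mul_sum, mul_smul_comm]
  have hf0 : ∀ x : K, x ≠ 0 → f x ≠ 0 := by
    intro x hx hfx
    obtain ⟨u, rfl⟩ := exists_coeff hq hK hv x
    rw [hf] at hfx
    have := Fintype.linearIndependent_iff.1 hw u hfx
    exact hx (by simp [this])
  let φ : Kˣ → Kˣ := fun x => Units.mk0 (f x / x) (div_ne_zero (hf0 x x.ne_zero) x.ne_zero)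
  -- if `f x = c x` and `f y = c y`, then the word `w - c v` has two relations
  have hφ : Function.Injective φ := by
    intro x y hxy
    by_contra hne
    have hxy' : f x / x = f y / y := congrArg Units.val hxy
    set c := f x / x with hc
    have hx : f x = c * x := by rw [hc, div_mul_cancel₀ _ x.ne_zero]
    have hy : f y = c * y := by rw [hxy', div_mul_cancel₀ _ y.ne_zero]
    obtain ⟨u, hu⟩ := exists_coeff hq hK hv (x : K)
    obtain ⟨u', hu'⟩ := exists_coeff hq hK hv (y : K)
    have hrel : ∀ t : Fin 4 → Fq, f (∑ j, t j • v j) = c * ∑ j, t j • v j →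
        ∑ j, t j • (w - c • v) j = 0 := by
      intro t ht
      rw [hf] at ht
      simp only [Pi.sub_apply, Pi.smul_apply, smul_eq_mul, smul_sub, Finset.sum_sub_distrib, ht,
        Finset.mul_sum, mul_smul_comm, sub_self]
    have hr := rankQ_of_mem hMRD (c := w - c • v) (C.sub_mem hwC (C.smul_mem c hvC))
      (fun hz => hvw c (sub_eq_zero.1 hz))
    have hr2 := rankQ_le_two hq (w - c • v) (u := u) (u' := u')
      (by rintro rfl; simp at hu)
      (by rintro rfl; simp at hu')
      (by rintro rfl; exact hne (Units.ext (hu.trans hu'.symm)))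
      (hrel u (by rw [← hu]; exact hx)) (hrel u' (by rw [← hu']; exact hy))
    omega
  obtain ⟨h0, h2, h13⟩ := coeff_of_injective hK (a := a) φ hφ (fun x => by
    have := x.ne_zero
    simp only [φ, Units.val_mk0, f]
    field_simp)
  have hw0 : w ≠ 0 := by simpa using hvw 0
  have hscale : ∀ (s : K) (z : Fin 4 → K), w = s • z → z ∈ C := by
    intro s z hz
    have hs : s ≠ 0 := by rintro rfl; exact hw0 (by simpa using hz)
    have : z = s⁻¹ • w := by rw [hz, inv_smul_smul₀ hs]
    rw [this]
    exact C.smul_mem _ hwC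
  rcases h13 with h1 | h3
  · have hg : LinearIndependent Fq (fun j => v j ^ 8) := by
      rw [Fintype.linearIndependent_iff] at hv ⊢
      intro u hu
      have e3 := sum_smul_pow hq u v 3
      norm_num at e3
      rw [hu] at e3
      exact hv u (by simpa using e3)
    have h8 : (fun j => v j ^ 8) ∈ C := hscale (a 3) _ (by ext j; simp [ha, h0, h1, h2])
    refine ⟨_, hg, eq_span_moore hq hK (by norm_num) hMRD.1 hg fun i => ?_⟩
    fin_cases i
    · simpa using h8
    · simpa [← pow_mul, h16] using hvC
  · have h8 : (fun j => v j ^ 2) ∈ C := hscale (a 1) _ (by ext j; simp [ha, h0, h3, h2])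
    refine ⟨_, hv, eq_span_moore hq hK (by norm_num) hMRD.1 hv fun i => ?_⟩
    fin_cases i
    · simpa using hvC
    · simpa using h8

end Helpers

/-- every linear MRD code in `F_{2^4}^4` (of dimension `1 ≤ k ≤ 3`)
is a Gabidulin code. -/
theorem stmt15 {k : ℕ} (Fq K : Type) [Field Fq] [Fintype Fq] [Field K] [Fintype K]
    [Algebra Fq K] (hq : Fintype.card Fq = 2) (hK : Fintype.card K = 2 ^ 4)
    (hk : 1 ≤ k) (hk3 : k ≤ 3)
    (C : Submodule K (Fin 4 → K)) (hMRD : IsMRD Fq C k) :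
    ∃ g : Fin 4 → K, LinearIndependent Fq g ∧
      C = Submodule.span K
        (Set.range fun i : Fin k => fun j : Fin 4 => (g j) ^ 2 ^ (i : ℕ)) := by
  interval_cases k
  · exact gabidulin_one hq hK C hMRD
  · exact gabidulin_two hq hK C hMRD
  · exact gabidulin_three hq hK C hMRD
end
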